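/- In the chain-of-gadgets graph G of the previous statement, no two spanning trees T_1, T_2 can collectively 1-span G when the chain is sufficiently long: precisely, if the chain has at least 2·5^3+1 gadgets, then for any two spanning trees T_1,T_2 there exist vertices u,v of G with dist_{T_j}(u,v) > dist_G(u,v)+1 for both j=1,2. -/

import Mathlib

open SimpleGraph

/-- The chain of m gadgets, each gadget being K_5 minus the edge xy
(triangle vertices 1,2,3 and universal vertices x, y), chained by identifying
the y vertex of each gadget with the x vertex of the next. -/
def chainRel (m : ℕ) :
    (Fin (m + 1) ⊕ Fin m × Fin 3) → (Fin (m + 1) ⊕ Fin m × Fin 3) → Prop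
  | .inl a, .inr (g, _) => (a : ℕ) = (g : ℕ) ∨ (a : ℕ) = (g : ℕ) + 1
  | .inr (g, _), .inr (g', _) => g = g'
  | _, _ => False

def chainG (m : ℕ) : SimpleGraph (Fin (m + 1) ⊕ Fin m × Fin 3) :=
  SimpleGraph.fromRel (chainRel m)

section helpers

variable {m : ℕ}

def chPos (m : ℕ) : (Fin (m + 1) ⊕ Fin m × Fin 3) → ℕ
  | .inl a => 2 * (a : ℕ)
  | .inr (g, _) => 2 * (g : ℕ) + 1

lemma chPos_adj {u v : Fin (m + 1) ⊕ Fin m × Fin 3} (h : (chainG m).Adj u v) :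
    chPos m u ≤ chPos m v + 1 ∧ chPos m v ≤ chPos m u + 1 := by
  rcases u with a | ⟨g, i⟩ <;> rcases v with b | ⟨g', j⟩ <;>
    simp [chainG, chainRel, chPos] at h ⊢ <;> grind

lemma adj_left (g : Fin m) (i : Fin 3) :
    (chainG m).Adj (.inl g.castSucc) (.inr (g, i)) := by
  simp [chainG, chainRel]

lemma adj_right (g : Fin m) (i : Fin 3) :
    (chainG m).Adj (.inr (g, i)) (.inl g.succ) := by
  simp [chainG, chainRel]

lemma walk_pos {T : SimpleGraph (Fin (m + 1) ⊕ Fin m × Fin 3)} (hT : T ≤ chainG m)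
    {u v : Fin (m + 1) ⊕ Fin m × Fin 3} (p : T.Walk u v) :
    chPos m v ≤ chPos m u + p.length := by
  induction p with
  | nil => simp
  | cons h p ih =>
    have := chPos_adj (hT h)
    simp only [Walk.length_cons]
    omega

lemma chDist_lb {T : SimpleGraph (Fin (m + 1) ⊕ Fin m × Fin 3)} (hT : T ≤ chainG m)
    (hc : T.Connected) (u v : Fin (m + 1) ⊕ Fin m × Fin 3) :
    chPos m v ≤ chPos m u + T.dist u v := by
  obtain ⟨p, hp⟩ := hc.exists_walk_length_eq_dist u v
  rw [← hp]
  exact walk_pos hT p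

lemma walk_cut {T : SimpleGraph (Fin (m + 1) ⊕ Fin m × Fin 3)} (hT : T ≤ chainG m)
    {u v : Fin (m + 1) ⊕ Fin m × Fin 3} (p : T.Walk u v) (k : Fin (m + 1))
    (hu : chPos m u ≤ 2 * (k : ℕ)) (hv : 2 * (k : ℕ) ≤ chPos m v) :
    Sum.inl k ∈ p.support := by
  have key : ∀ w : Fin (m + 1) ⊕ Fin m × Fin 3, chPos m w = 2 * (k : ℕ) → w = .inl k := by
    intro w hw
    rcases w with a | ⟨g, i⟩
    · simp only [chPos] at hw
      congr 1
      ext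
      omega
    · simp only [chPos] at hw
      omega
  induction p with
  | nil => simp [key _ (le_antisymm hu hv)]
  | @cons a b c h p ih =>
    have := chPos_adj (hT h)
    by_cases hb : chPos m b ≤ 2 * (k : ℕ)
    · simp [ih hb hv]
    · have : chPos m a = 2 * (k : ℕ) := by omega
      simp [key _ this]

lemma dist_cut {T : SimpleGraph (Fin (m + 1) ⊕ Fin m × Fin 3)} (hT : T ≤ chainG m)
    (hc : T.Connected) {u v : Fin (m + 1) ⊕ Fin m × Fin 3} (k : Fin (m + 1))
    (hu : chPos m u ≤ 2 * (k : ℕ)) (hv : 2 * (k : ℕ) ≤ chPos m v) :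
    T.dist u (.inl k) + T.dist (.inl k) v ≤ T.dist u v := by
  obtain ⟨p, hp⟩ := hc.exists_walk_length_eq_dist u v
  have hk := walk_cut hT p k hu hv
  have h1 := dist_le (p.takeUntil _ hk)
  have h2 := dist_le (p.dropUntil _ hk)
  have h3 := congrArg Walk.length (p.take_spec hk)
  rw [Walk.length_append] at h3
  omega

lemma G_dist_x (hG : (chainG m).Connected) (n : ℕ) : ∀ i j : Fin (m + 1), (j : ℕ) = i + n →
    (chainG m).dist (.inl i) (.inl j) ≤ 2 * n := by
  induction n with
  | zero =>
    intro i j h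
    have : i = j := by ext; omega
    subst this
    simp
  | succ n ih =>
    intro i j h
    have hj := j.isLt
    let g : Fin m := ⟨i + n, by omega⟩
    have h1 := ih i g.castSucc rfl
    have e : j = g.succ := by ext; simp [g]; omega
    have h2 : (chainG m).dist (.inl g.castSucc) (.inr (g, 0)) = 1 :=
      dist_eq_one_iff_adj.2 (adj_left g 0)
    have h3 : (chainG m).dist (.inr (g, 0)) (.inl g.succ) = 1 :=
      dist_eq_one_iff_adj.2 (adj_right g 0)
    have h4 := hG.dist_triangle (u := .inl g.castSucc) (v := .inr (g, 0)) (w := .inl g.succ)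
    have h5 := hG.dist_triangle (u := .inl i) (v := .inl g.castSucc) (w := .inl g.succ)
    rw [e]
    omega

lemma G_dist (hG : (chainG m).Connected) (a c : Fin m) (hac : a < c) (i k : Fin 3) :
    (chainG m).dist (.inr (a, i)) (.inr (c, k)) ≤ 2 * ((c : ℕ) - a) := by
  have hac' : (a : ℕ) < c := hac
  have h1 := G_dist_x hG ((c : ℕ) - (a + 1)) a.succ c.castSucc (by simp; omega)
  have h2 : (chainG m).dist (.inl c.castSucc) (.inr (c, k)) = 1 :=
    dist_eq_one_iff_adj.2 (adj_left c k)
  have h3 : (chainG m).dist (.inr (a, i)) (.inl a.succ) = 1 :=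
    dist_eq_one_iff_adj.2 (adj_right a i)
  have h4 := hG.dist_triangle (u := .inr (a, i)) (v := .inl a.succ) (w := .inl c.castSucc)
  have h5 := hG.dist_triangle (u := .inr (a, i)) (v := .inl c.castSucc) (w := .inr (c, k))
  omega

lemma dist_parity {V : Type*} {T : SimpleGraph V} (hc : T.Connected) (ha : T.IsAcyclic)
    (u v w : V) : Even (T.dist u v + T.dist v w + T.dist u w) := by
  obtain ⟨p, hp⟩ := hc.exists_walk_length_eq_dist u v
  obtain ⟨q, hq⟩ := hc.exists_walk_length_eq_dist v w
  obtain ⟨r, hr⟩ := hc.exists_walk_length_eq_dist u w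
  obtain ⟨C⟩ := ha.isBipartite
  let C' : T.Coloring Bool := T.recolorOfEquiv finTwoEquiv C
  have h := (C'.even_length_iff_congr ((p.append q).append r.reverse)).2 Iff.rfl
  rw [Walk.length_append, Walk.length_append, Walk.length_reverse, hp, hq, hr] at h
  exact h

lemma mid_unique {V : Type*} {T : SimpleGraph V} (ha : T.IsAcyclic) {x y u v : V} (hxy : x ≠ y)
    (h1 : T.Adj x u) (h2 : T.Adj u y) (h3 : T.Adj x v) (h4 : T.Adj v y) : u = v := by
  have p1 : (Walk.cons h1 (Walk.cons h2 Walk.nil)).IsPath := by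
    simp [Walk.cons_isPath_iff, h1.ne, h2.ne, hxy]
  have p2 : (Walk.cons h3 (Walk.cons h4 Walk.nil)).IsPath := by
    simp [Walk.cons_isPath_iff, h3.ne, h4.ne, hxy]
  have := congrArg Subtype.val (ha.path_unique ⟨_, p1⟩ ⟨_, p2⟩)
  have := congrArg Walk.support this
  simpa using this

/-- the vertex `i` of gadget `g` is off the length two path of the tree -/
def Good (T : SimpleGraph (Fin (m + 1) ⊕ Fin m × Fin 3)) (g : Fin m) (i : Fin 3) : Prop :=
  ¬ (T.Adj (.inl g.castSucc) (.inr (g, i)) ∧ T.Adj (.inr (g, i)) (.inl g.succ))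

lemma exists_good {T₁ T₂ : SimpleGraph (Fin (m + 1) ⊕ Fin m × Fin 3)}
    (ha₁ : T₁.IsAcyclic) (ha₂ : T₂.IsAcyclic) (g : Fin m) :
    ∃ i, Good T₁ g i ∧ Good T₂ g i := by
  have key : ∀ T : SimpleGraph (Fin (m + 1) ⊕ Fin m × Fin 3), T.IsAcyclic →
      ∀ i j, ¬ Good T g i → ¬ Good T g j → i = j := by
    intro T ha i j hi hj
    simp only [Good, not_not] at hi hj
    have hne : (Sum.inl g.castSucc : Fin (m + 1) ⊕ Fin m × Fin 3) ≠ .inl g.succ := by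
      simp [Fin.ext_iff]
    simpa using mid_unique ha hne hi.1 hi.2 hj.1 hj.2
  have k1 := key T₁ ha₁
  have k2 := key T₂ ha₂
  by_contra! hcon
  have a01 := k1 0 1
  have a02 := k1 0 2
  have a12 := k1 1 2
  have b01 := k2 0 1
  have b02 := k2 0 2
  have b12 := k2 1 2
  have c0 := hcon 0
  have c1 := hcon 1
  have c2 := hcon 2
  simp at a01 a02 a12 b01 b02 b12
  tauto

lemma good_bounds {T : SimpleGraph (Fin (m + 1) ⊕ Fin m × Fin 3)} (hT : T ≤ chainG m)
    (hc : T.Connected) (ha : T.IsAcyclic) (g : Fin m) (i : Fin 3) (h : Good T g i) :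
    1 ≤ T.dist (.inl g.castSucc) (.inr (g, i)) ∧ 1 ≤ T.dist (.inr (g, i)) (.inl g.succ) ∧
    2 ≤ T.dist (.inl g.castSucc) (.inl g.succ) ∧
    3 ≤ T.dist (.inl g.castSucc) (.inr (g, i)) + T.dist (.inr (g, i)) (.inl g.succ) ∧
    (T.dist (.inl g.castSucc) (.inl g.succ) = 2 →
      4 ≤ T.dist (.inl g.castSucc) (.inr (g, i)) + T.dist (.inr (g, i)) (.inl g.succ)) := by
  have h1 := chDist_lb hT hc (.inl g.castSucc) (.inr (g, i))
  have h2 := chDist_lb hT hc (.inr (g, i)) (.inl g.succ)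
  have h3 := chDist_lb hT hc (.inl g.castSucc) (.inl g.succ)
  have h4 := dist_parity hc ha (.inl g.castSucc) (.inr (g, i)) (.inl g.succ)
  simp only [chPos, Fin.val_castSucc, Fin.val_succ] at h1 h2 h3
  simp only [Good, ← dist_eq_one_iff_adj] at h
  rw [Nat.even_iff] at h4
  omega

lemma tree_far {T : SimpleGraph (Fin (m + 1) ⊕ Fin m × Fin 3)} (hT : T ≤ chainG m)
    (hc : T.Connected) (a b c : Fin m) (hab : a < b) (hbc : b < c) (i k : Fin 3) :
    T.dist (.inr (a, i)) (.inl a.succ) + T.dist (.inl b.castSucc) (.inl b.succ) +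
      T.dist (.inl c.castSucc) (.inr (c, k)) + 2 * ((c : ℕ) - a) ≤
      T.dist (.inr (a, i)) (.inr (c, k)) + 4 := by
  have hab' : (a : ℕ) < b := hab
  have hbc' : (b : ℕ) < c := hbc
  have h1 := dist_cut hT hc (u := .inr (a, i)) (v := .inr (c, k)) a.succ
    (by simp only [chPos, Fin.val_succ]; omega) (by simp [chPos]; omega)
  have h2 := dist_cut hT hc (u := .inl a.succ) (v := .inr (c, k)) b.castSucc
    (by simp [chPos]; omega) (by simp [chPos]; omega)
  have h3 := dist_cut hT hc (u := .inl b.castSucc) (v := .inr (c, k)) b.succ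
    (by simp [chPos]) (by simp [chPos]; omega)
  have h4 := dist_cut hT hc (u := .inl b.succ) (v := .inr (c, k)) c.castSucc
    (by simp [chPos]; omega) (by simp [chPos])
  have h5 := chDist_lb hT hc (.inl a.succ) (.inl b.castSucc)
  have h6 := chDist_lb hT hc (.inl b.succ) (.inl c.castSucc)
  simp only [chPos, Fin.val_castSucc, Fin.val_succ] at h5 h6
  omega

noncomputable def col (T : SimpleGraph (Fin (m + 1) ⊕ Fin m × Fin 3)) (f : Fin m → Fin 3)
    (g : Fin m) : Fin 3 × Bool :=
  (⟨min (T.dist (.inl g.castSucc) (.inr (g, f g)) - 1) 2, by omega⟩,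
    decide (T.dist (.inl g.castSucc) (.inl g.succ) = 2))

lemma tree_bad {T : SimpleGraph (Fin (m + 1) ⊕ Fin m × Fin 3)} (hT : T ≤ chainG m)
    (hc : T.Connected) (ha : T.IsAcyclic) (f : Fin m → Fin 3) (hf : ∀ g, Good T g (f g))
    (a b c : Fin m) (hab : a < b) (hbc : b < c) (h1 : col T f a = col T f b)
    (h2 : col T f a = col T f c) :
    2 * ((c : ℕ) - a) + 1 < T.dist (.inr (a, f a)) (.inr (c, f c)) := by
  have h := tree_far hT hc a b c hab hbc (f a) (f c)
  have ga := good_bounds hT hc ha a _ (hf a)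
  have gb := good_bounds hT hc ha b _ (hf b)
  have gc := good_bounds hT hc ha c _ (hf c)
  simp only [col, Prod.mk.injEq, Fin.mk.injEq, decide_eq_decide] at h1 h2
  omega

end helpers

/-- If the chain has at least 2·5³+1 gadgets, no two spanning trees collectively
1-span it: some pair of vertices is badly approximated by both trees. -/
theorem stmt7 :
    ∀ m : ℕ, 2 * 5 ^ 3 + 1 ≤ m →
    ∀ T₁ T₂ : SimpleGraph (Fin (m + 1) ⊕ Fin m × Fin 3),
      T₁ ≤ chainG m → T₁.Connected → T₁.IsAcyclic →
      T₂ ≤ chainG m → T₂.Connected → T₂.IsAcyclic →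
      ∃ u v : Fin (m + 1) ⊕ Fin m × Fin 3,
        (chainG m).dist u v + 1 < T₁.dist u v ∧
        (chainG m).dist u v + 1 < T₂.dist u v := by
  intro m hm T₁ T₂ hT₁ hc₁ ha₁ hT₂ hc₂ ha₂
  have hG : (chainG m).Connected := hc₁.mono hT₁
  choose f hf₁ hf₂ using fun g : Fin m => exists_good ha₁ ha₂ g
  obtain ⟨y, -, hy⟩ := Finset.exists_lt_card_fiber_of_mul_lt_card_of_maps_to
    (s := (Finset.univ : Finset (Fin m)))
    (t := (Finset.univ : Finset ((Fin 3 × Bool) × (Fin 3 × Bool))))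
    (f := fun g => (col T₁ f g, col T₂ f g)) (n := 2) (fun _ _ => Finset.mem_univ _)
    (by simp; omega)
  obtain ⟨t, ht, htc⟩ := Finset.exists_subset_card_eq (Nat.succ_le_of_lt hy)
  let o := t.orderEmbOfFin htc
  have hcol : ∀ i, (col T₁ f (o i), col T₂ f (o i)) = y := fun i =>
    (Finset.mem_filter.1 (ht (Finset.orderEmbOfFin_mem t htc i))).2
  have hab : o 0 < o 1 := o.strictMono (by decide)
  have hbc : o 1 < o 2 := o.strictMono (by decide)
  have e1 := (hcol 0).trans (hcol 1).symm
  have e2 := (hcol 0).trans (hcol 2).symm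
  rw [Prod.mk.injEq] at e1 e2
  have hd := G_dist hG (o 0) (o 2) (hab.trans hbc) (f (o 0)) (f (o 2))
  have b1 := tree_bad hT₁ hc₁ ha₁ f hf₁ _ _ _ hab hbc e1.1 e2.1
  have b2 := tree_bad hT₂ hc₂ ha₂ f hf₂ _ _ _ hab hbc e1.2 e2.2
  exact ⟨.inr (o 0, f (o 0)), .inr (o 2, f (o 2)), by omega, by omega⟩
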